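/- Let (M,E,V) be a path geometry and ξ₀ ∈ Γ(E) a nowhere vanishing section. Then one can uniquely define a projection Π = Π_E ⊕ Π_V : TM → H and partial connections ∇^E, ∇^V, ∇^{ι(Q)} (covariant derivatives only in directions of H) on the indicated bundles by the properties, for ξ = fξ₀ with f ∈ C^∞(M) and η,η₁,η₂ ∈ Γ(V): (a) ∇^E ξ = df ⊗ ξ₀; (b) 𝓛(ξ₀, ∇^V_ξ η) = 𝓛(ξ₀, Π_V([ξ,η])) = ½ q([ξ,[ξ₀,η]]); (c) Π_E([ξ,η]) = −df(η)ξ₀; (d) 𝓛(ξ₀, ∇^V_{η₁}η₂) = q([η₁,[ξ₀,η₂]]); (e) ∇^{ι(Q)} ι(𝓛(ξ,η)) = ι(𝓛(∇^E ξ, η) + 𝓛(ξ, ∇^V η)). Moreover, the projection Π and the partial connection ∇ on TM obtained from ∇^E, ∇^V, ∇^{ι(Q)} via the decomposition TM = E ⊕ V ⊕ ι(Q) satisfy: E, V, ι(Q) are parallel and ∇ξ₀ = 0; ι∘𝓛 is parallel; and the torsion satisfies τ(E,V) ⊂ ι(Q) and τ(H,ι(Q)) ⊂ H; these conditions in turn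 determine Π and the partial connections uniquely. -/

import Mathlib

/-!
Bracketing with the scale `ξ₀` and projecting to `Q` gives a `C`-linear isomorphism
`L : V ≃ Q`, `L η = 𝓛(ξ₀, η)` (`PathGeometry.leviEquiv`), because `E` is free on `ξ₀` and `𝓛` is
an isomorphism `E ⊗ V ≃ Q`.  Hence every equation of the form `𝓛(ξ₀, η) = w` has exactly one
solution `η ∈ V`, and the defining equations prescribe all the data: `Π_V [ξ₀, η]` together with
`Π_E [ξ₀, η] = 0` fixes `ι (L η) = [ξ₀, η] - Π_V [ξ₀, η]`, and then the derivative of sections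
of each of `E`, `V`, `ι(Q)` is fixed (`SatisfiesEqs.unique`).

For existence, `ι₀ η = [ξ₀, η] - L⁻¹ (½ q [ξ₀, [ξ₀, η]])` is `C`-linear: the factor `½` is exactly
what cancels the two first order terms coming from `[ξ₀, [ξ₀, f η]]`.  This yields an isomorphism
`C × V × V ≃ TM`, and `∇^V_ψ η = L⁻¹ (q [½ ψ_E + ψ_V, [ξ₀, η]])` satisfies the Leibniz rule, by the
same count together with the involutivity of `V`.

For the equivalence with the structural conditions, `τ(E,V) ⊂ ι(Q)` says
`∇_ξ η = Π_V [ξ, η]` and `Π_E [ξ, η] = -df(η) ξ₀` for `ξ = f ξ₀`; with this, the condition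
`τ(H, ι(Q)) ⊂ H` at `ι (L η) = [ξ₀, η] - Π_V [ξ₀, η]` reads
`𝓛(ξ₀, ∇_ψ η) = q [ψ, [ξ₀, η]] - q [ψ, ∇_{ξ₀} η]`.  The last term vanishes for `ψ ∈ V` and is
`𝓛(ξ₀, ∇_ψ η)` for `ψ ∈ E`, which is where the `½` in the defining equations comes from.
-/

/-!
An algebraic model of the smooth calculus on a smooth manifold `M`:
`C` plays the role of the algebra `C^∞(M,ℝ)` of smooth functions and `X` plays the
role of the `C^∞(M,ℝ)`-module `𝔛(M)` of smooth vector fields, together with the Lie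
bracket of vector fields and the derivative of functions along vector fields
(i.e. a Lie–Rinehart algebra over `ℝ`).  Distributions (smooth subbundles of `TM`)
are modelled as `C`-submodules of `X`, linear connections on `TM` as operators
`X → X → X` with the usual tensoriality and Leibniz properties, and one-forms as
`C`-linear maps `X →ₗ[C] C`.
-/

open scoped TensorProduct

/-- The algebra of smooth functions together with the module of smooth vector
fields on a smooth manifold, with the Lie bracket and directional derivative. -/
structure VFCalc where
  /-- the smooth functions `C^∞(M,ℝ)` -/
  C : Type
  /-- the smooth vector fields `𝔛(M)` -/
  X : Type
  [ringC : CommRing C]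
  [algC : Algebra ℝ C]
  [grpX : AddCommGroup X]
  [modX : Module C X]
  /-- the Lie bracket of vector fields -/
  lie : X → X → X
  /-- the derivative `D ψ f = ψ · f` of a function along a vector field -/
  D : X → C → C
  lie_add_left : ∀ ψ₁ ψ₂ φ, lie (ψ₁ + ψ₂) φ = lie ψ₁ φ + lie ψ₂ φ
  lie_skew : ∀ ψ φ, lie φ ψ = - lie ψ φ
  jacobi : ∀ ψ₁ ψ₂ ψ₃, lie ψ₁ (lie ψ₂ ψ₃) = lie (lie ψ₁ ψ₂) ψ₃ + lie ψ₂ (lie ψ₁ ψ₃)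
  lie_smul_right : ∀ (f : C) (ψ φ : X), lie ψ (f • φ) = f • lie ψ φ + (D ψ f) • φ
  D_add_left : ∀ ψ₁ ψ₂ f, D (ψ₁ + ψ₂) f = D ψ₁ f + D ψ₂ f
  D_smul_left : ∀ (g : C) ψ f, D (g • ψ) f = g * D ψ f
  D_add_right : ∀ ψ f₁ f₂, D ψ (f₁ + f₂) = D ψ f₁ + D ψ f₂
  D_mul_right : ∀ ψ f₁ f₂, D ψ (f₁ * f₂) = f₁ * D ψ f₂ + f₂ * D ψ f₁
  D_algebraMap : ∀ ψ r, D ψ (algebraMap ℝ C r) = 0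

attribute [instance] VFCalc.ringC VFCalc.algC VFCalc.grpX VFCalc.modX

/-- the exterior derivative of a one-form, `dα(ψ,φ) = ψ·α(φ) − φ·α(ψ) − α([ψ,φ])` -/
def VFCalc.dform (P : VFCalc) (α : P.X →ₗ[P.C] P.C) (ψ φ : P.X) : P.C :=
  P.D ψ (α φ) - P.D φ (α ψ) - α (P.lie ψ φ)

/-- A (generalized) path geometry on a manifold `M` of dimension `2n+1`:
distributions `E, V ⊂ TM` (of rank `1` and `n`) with `E ∩ V = 0`, `V` involutive,
such that the Levi bracket induces an isomorphism `E ⊗ V ≅ Q := TM/(E ⊕ V)`. -/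
structure PathGeometry extends VFCalc where
  /-- the rank one distribution `E` -/
  E : Submodule C X
  /-- the rank `n` distribution `V` -/
  V : Submodule C X
  inf_bot : E ⊓ V = ⊥
  involutive : ∀ η₁ ∈ V, ∀ η₂ ∈ V, lie η₁ η₂ ∈ V
  /-- the Levi bracket `E ⊗ V → Q = TM/(E ⊔ V)` is an isomorphism of bundles -/
  leviIso : (↥E ⊗[C] ↥V) ≃ₗ[C] (X ⧸ (E ⊔ V))
  leviIso_apply : ∀ (ξ : ↥E) (η : ↥V),
    leviIso (ξ ⊗ₜ[C] η) = Submodule.Quotient.mk (lie (ξ : X) (η : X))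

namespace PathGeometry

variable (P : PathGeometry)

/-- the corank one distribution `H = E ⊕ V` -/
def H : Submodule P.C P.X := P.E ⊔ P.V

/-- the quotient bundle `Q = TM/H` -/
abbrev Q := P.X ⧸ P.H

/-- the quotient projection `q : TM → Q` -/
def q : P.X →ₗ[P.C] P.Q := P.H.mkQ

/-- the Levi bracket `𝓛(ψ,φ) = q([ψ,φ])` -/
def levi (ψ φ : P.X) : P.Q := P.q (P.lie ψ φ)

/-- the constant function `½` -/
noncomputable def half : P.C := algebraMap ℝ P.C (1/2)

/-- A (local) scale: a nowhere vanishing smooth section `ξ₀` of the line bundle `E`,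
i.e. a trivialization of `E`, modelled as a basis of `E` as free rank one module. -/
structure IsScale (ξ₀ : P.X) : Prop where
  mem : ξ₀ ∈ P.E
  span : ∀ ξ ∈ P.E, ∃ f : P.C, ξ = f • ξ₀
  basis : ∀ f : P.C, f • ξ₀ = 0 → f = 0

end PathGeometry

/-- A linear connection on `TM`. -/
structure Conn (P : VFCalc) where
  /-- the covariant derivative `cov ψ φ = ∇_ψ φ` -/
  cov : P.X → P.X → P.X
  add_left : ∀ ψ₁ ψ₂ φ, cov (ψ₁ + ψ₂) φ = cov ψ₁ φ + cov ψ₂ φ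
  smul_left : ∀ (f : P.C) ψ φ, cov (f • ψ) φ = f • cov ψ φ
  add_right : ∀ ψ φ₁ φ₂, cov ψ (φ₁ + φ₂) = cov ψ φ₁ + cov ψ φ₂
  leibniz : ∀ (f : P.C) ψ φ, cov ψ (f • φ) = f • cov ψ φ + (P.D ψ f) • φ

namespace Conn

variable {P : VFCalc} (cn : Conn P)

/-- the torsion `τ(ψ₁,ψ₂) = ∇_{ψ₁}ψ₂ − ∇_{ψ₂}ψ₁ − [ψ₁,ψ₂]` -/
def torsion (ψ₁ ψ₂ : P.X) : P.X := cn.cov ψ₁ ψ₂ - cn.cov ψ₂ ψ₁ - P.lie ψ₁ ψ₂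

/-- the curvature `R(ψ₁,ψ₂)(ψ₃) = ∇_{ψ₁}∇_{ψ₂}ψ₃ − ∇_{ψ₂}∇_{ψ₁}ψ₃ − ∇_{[ψ₁,ψ₂]}ψ₃` -/
def curv (ψ₁ ψ₂ ψ₃ : P.X) : P.X :=
  cn.cov ψ₁ (cn.cov ψ₂ ψ₃) - cn.cov ψ₂ (cn.cov ψ₁ ψ₃) - cn.cov (P.lie ψ₁ ψ₂) ψ₃

end Conn

/-- The Weyl structure associated to a scale `ξ₀`: a linear connection `∇` on `TM`
together with a decomposition `TM = E ⊕ V ⊕ ι(Q)` (encoded by the splitting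
`ι : Q → TM` of `q`) such that `E`, `V`, `ι(Q)` are parallel, `∇ξ₀ = 0`,
`ι ∘ 𝓛 : E ⊗ V → ι(Q)` is parallel, the torsion satisfies `τ(E,V) ⊂ ι(Q)`,
`τ(H,ι(Q)) ⊂ H` and the normalization
`𝓛(τ(ξ₀,ζ₁),η₂) = 2𝓛(ξ₀,τ(η₁,ζ₂))` for `ζᵢ = ι(𝓛(ξ₀,ηᵢ))`. -/
structure WeylStructure (P : PathGeometry) (ξ₀ : P.X) where
  conn : Conn P.toVFCalc
  ι : P.Q →ₗ[P.C] P.X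
  q_ι : ∀ w, P.q (ι w) = w
  parE : ∀ ψ : P.X, ∀ ξ ∈ P.E, conn.cov ψ ξ ∈ P.E
  parV : ∀ ψ : P.X, ∀ η ∈ P.V, conn.cov ψ η ∈ P.V
  parQ : ∀ (ψ : P.X) (w : P.Q), conn.cov ψ (ι w) ∈ LinearMap.range ι
  parScale : ∀ ψ : P.X, conn.cov ψ ξ₀ = 0
  parLevi : ∀ ψ : P.X, ∀ ξ ∈ P.E, ∀ η ∈ P.V,
    conn.cov ψ (ι (P.levi ξ η)) = ι (P.levi (conn.cov ψ ξ) η) + ι (P.levi ξ (conn.cov ψ η))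
  torsEV : ∀ ξ ∈ P.E, ∀ η ∈ P.V, conn.torsion ξ η ∈ LinearMap.range ι
  torsHQ : ∀ ψ ∈ P.H, ∀ w : P.Q, conn.torsion ψ (ι w) ∈ P.H
  norm : ∀ η₁ ∈ P.V, ∀ η₂ ∈ P.V,
    P.levi (conn.torsion ξ₀ (ι (P.levi ξ₀ η₁))) η₂
      = (2 : P.C) • P.levi ξ₀ (conn.torsion η₁ (ι (P.levi ξ₀ η₂)))

/-- The underlying data of a "partial Weyl structure": a splitting `ι : Q → TM` of `q`
(equivalently a decomposition `TM = E ⊕ V ⊕ ι(Q)` with projections `PiE`, `PiV` onto the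
`E`- and `V`-components), together with a partial linear connection on `TM`, i.e. an
operator `Γ(H) × 𝔛(M) → 𝔛(M)` which is tensorial in the first variable and satisfies
the Leibniz rule in the second variable. -/
structure PartialWeylData (P : PathGeometry) where
  /-- the partial covariant derivative, defined for directions in `H` only -/
  cov : ↥P.H → P.X → P.X
  cov_add_left : ∀ (ψ₁ ψ₂ : ↥P.H) (φ : P.X), cov (ψ₁ + ψ₂) φ = cov ψ₁ φ + cov ψ₂ φ
  cov_smul_left : ∀ (f : P.C) (ψ : ↥P.H) (φ : P.X), cov (f • ψ) φ = f • cov ψ φ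
  cov_add_right : ∀ (ψ : ↥P.H) (φ₁ φ₂ : P.X), cov ψ (φ₁ + φ₂) = cov ψ φ₁ + cov ψ φ₂
  cov_leibniz : ∀ (f : P.C) (ψ : ↥P.H) (φ : P.X),
    cov ψ (f • φ) = f • cov ψ φ + (P.D (ψ : P.X) f) • φ
  /-- the splitting `ι : Q → TM` of `q`, whose image is the chosen complement of `H` -/
  ι : P.Q →ₗ[P.C] P.X
  q_ι : ∀ w, P.q (ι w) = w
  /-- the `E`-component `Π_E` of the projection `Π : TM → H` along `ι(Q)` -/
  PiE : P.X →ₗ[P.C] P.X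
  /-- the `V`-component `Π_V` of the projection `Π : TM → H` along `ι(Q)` -/
  PiV : P.X →ₗ[P.C] P.X
  PiE_mem : ∀ ψ, PiE ψ ∈ P.E
  PiV_mem : ∀ ψ, PiV ψ ∈ P.V
  decomp : ∀ ψ, ψ = PiE ψ + PiV ψ + ι (P.q ψ)

/-- The defining equations (the five displayed equations of Proposition 2.3) for the
partial Weyl structure associated to a scale `ξ₀`.  (Any `ξ ∈ Γ(E)` is of the form
`f • ξ₀`, so the equations involving a general section `ξ` of `E` are formulated either
for `ξ = f • ξ₀` or for directions `ψ ∈ H` lying in `E`.) -/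
structure SatisfiesEqs (P : PathGeometry) (ξ₀ : P.X) (W : PartialWeylData P) : Prop where
  /-- `∇^E ξ = df ⊗ ξ₀` for `ξ = f ξ₀` -/
  eqE : ∀ (ψ : ↥P.H) (f : P.C), W.cov ψ (f • ξ₀) = (P.D (ψ : P.X) f) • ξ₀
  /-- `∇^V` takes values in `V` -/
  memV : ∀ (ψ : ↥P.H), ∀ η ∈ P.V, W.cov ψ η ∈ P.V
  /-- `𝓛(ξ₀, ∇^V_ξ η) = 𝓛(ξ₀, Π_V([ξ,η])) = ½ q([ξ,[ξ₀,η]])` for `ξ ∈ Γ(E)` -/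
  eqVE : ∀ (ψ : ↥P.H), (ψ : P.X) ∈ P.E → ∀ η ∈ P.V,
    P.levi ξ₀ (W.cov ψ η) = P.half • P.q (P.lie (ψ : P.X) (P.lie ξ₀ η)) ∧
    P.levi ξ₀ (W.PiV (P.lie (ψ : P.X) η)) = P.half • P.q (P.lie (ψ : P.X) (P.lie ξ₀ η))
  /-- `Π_E([ξ,η]) = −df(η) ξ₀` for `ξ = f ξ₀` -/
  eqPiE : ∀ (f : P.C), ∀ η ∈ P.V, W.PiE (P.lie (f • ξ₀) η) = -((P.D η f) • ξ₀)
  /-- `𝓛(ξ₀, ∇^V_{η₁} η₂) = q([η₁,[ξ₀,η₂]])` -/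
  eqVV : ∀ (ψ : ↥P.H), (ψ : P.X) ∈ P.V → ∀ η ∈ P.V,
    P.levi ξ₀ (W.cov ψ η) = P.q (P.lie (ψ : P.X) (P.lie ξ₀ η))
  /-- `∇^{ι(Q)} ι(𝓛(ξ,η)) = ι(𝓛(∇^E ξ, η) + 𝓛(ξ, ∇^V η))` -/
  eqQ : ∀ (ψ : ↥P.H), ∀ ξ ∈ P.E, ∀ η ∈ P.V,
    W.cov ψ (W.ι (P.levi ξ η)) =
      W.ι (P.levi (W.cov ψ ξ) η + P.levi ξ (W.cov ψ η))

/-- The structural conditions on a partial Weyl structure: conditions (i), (ii) and the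
first two torsion conditions of (iii) of Theorem 2.2, in the form available for partial
connections: `E`, `V` and `ι(Q)` are parallel, `∇ξ₀ = 0`, `ι ∘ 𝓛` is parallel,
`τ(E,V) ⊂ ι(Q)`, and `τ(H,ι(Q)) ⊂ H` (for a partial connection the derivatives in
`ι(Q)`-directions are not defined, but they preserve `H`, so the condition
`τ(H,ι(Q)) ⊂ H` is equivalent to `q(∇_ψ ι(w) − [ψ, ι(w)]) = 0` for `ψ ∈ H`). -/
structure StructuralProps (P : PathGeometry) (ξ₀ : P.X) (W : PartialWeylData P) : Prop where
  parE : ∀ (ψ : ↥P.H), ∀ ξ ∈ P.E, W.cov ψ ξ ∈ P.E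
  parV : ∀ (ψ : ↥P.H), ∀ η ∈ P.V, W.cov ψ η ∈ P.V
  parQ : ∀ (ψ : ↥P.H) (w : P.Q), W.cov ψ (W.ι w) ∈ LinearMap.range W.ι
  parScale : ∀ (ψ : ↥P.H), W.cov ψ ξ₀ = 0
  parLevi : ∀ (ψ : ↥P.H), ∀ ξ ∈ P.E, ∀ η ∈ P.V,
    W.cov ψ (W.ι (P.levi ξ η)) = W.ι (P.levi (W.cov ψ ξ) η + P.levi ξ (W.cov ψ η))
  torsEV : ∀ (ψ χ : ↥P.H), (ψ : P.X) ∈ P.E → (χ : P.X) ∈ P.V →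
    W.cov ψ (χ : P.X) - W.cov χ (ψ : P.X) - P.lie (ψ : P.X) (χ : P.X) ∈ LinearMap.range W.ι
  torsHQ : ∀ (ψ : ↥P.H) (w : P.Q),
    P.q (W.cov ψ (W.ι w)) = P.q (P.lie (ψ : P.X) (W.ι w))

/-! ### Calculus with the Lie bracket -/

namespace VFCalc

variable (P : VFCalc)

lemma lie_add_right (ψ φ₁ φ₂ : P.X) : P.lie ψ (φ₁ + φ₂) = P.lie ψ φ₁ + P.lie ψ φ₂ := by
  rw [P.lie_skew, P.lie_add_left, P.lie_skew ψ φ₁, P.lie_skew ψ φ₂]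
  rw [P.lie_skew φ₁ ψ, P.lie_skew φ₂ ψ]; abel

lemma lie_smul_left (f : P.C) (ψ φ : P.X) :
    P.lie (f • ψ) φ = f • P.lie ψ φ - (P.D φ f) • ψ := by
  rw [P.lie_skew φ (f • ψ), P.lie_smul_right, P.lie_skew ψ φ]
  simp only [smul_neg, neg_add_rev]; abel

lemma lie_sub_right (ψ φ₁ φ₂ : P.X) : P.lie ψ (φ₁ - φ₂) = P.lie ψ φ₁ - P.lie ψ φ₂ := by
  rw [eq_sub_iff_add_eq, ← P.lie_add_right, sub_add_cancel]

lemma D_one (ψ : P.X) : P.D ψ 1 = 0 := by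
  have := P.D_algebraMap ψ 1
  rwa [map_one] at this

end VFCalc

namespace PathGeometry

variable (P : PathGeometry)

lemma half_add_half : P.half + P.half = 1 := by
  unfold half
  rw [← map_add]; norm_num

lemma E_le_H : P.E ≤ P.H := le_sup_left

lemma V_le_H : P.V ≤ P.H := le_sup_right

variable {P}

lemma q_eq_zero {φ : P.X} (h : φ ∈ P.H) : P.q φ = 0 :=
  (Submodule.Quotient.mk_eq_zero _).2 h

lemma q_eq_zero_iff {φ : P.X} : P.q φ = 0 ↔ φ ∈ P.H :=
  Submodule.Quotient.mk_eq_zero _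

/-- Modulo `H`, bracketing with a section of `H` is tensorial in that section. -/
lemma q_lie_smul_left (f : P.C) {ψ : P.X} (h : ψ ∈ P.H) (φ : P.X) :
    P.q (P.lie (f • ψ) φ) = f • P.q (P.lie ψ φ) := by
  rw [P.lie_smul_left, map_sub, map_smul, map_smul, q_eq_zero h, smul_zero, sub_zero]

lemma q_lie_smul_right (f : P.C) (ψ φ : P.X) :
    P.q (P.lie ψ (f • φ)) = f • P.q (P.lie ψ φ) + P.D ψ f • P.q φ := by
  rw [P.lie_smul_right, map_add, map_smul, map_smul]

lemma q_lie_VV {η₁ η₂ : P.X} (h₁ : η₁ ∈ P.V) (h₂ : η₂ ∈ P.V) : P.q (P.lie η₁ η₂) = 0 :=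
  q_eq_zero (P.V_le_H (P.involutive _ h₁ _ h₂))

lemma eq_zero_of_E_V {φ : P.X} (h₁ : φ ∈ P.E) (h₂ : φ ∈ P.V) : φ = 0 := by
  have : φ ∈ P.E ⊓ P.V := ⟨h₁, h₂⟩
  rwa [P.inf_bot, Submodule.mem_bot] at this

lemma eq_of_add_eq {a a' b b' : P.X} (ha : a ∈ P.E) (ha' : a' ∈ P.E) (hb : b ∈ P.V)
    (hb' : b' ∈ P.V) (h : a + b = a' + b') : a = a' ∧ b = b' := by
  have h1 : a - a' = b' - b := by
    rw [sub_eq_sub_iff_add_eq_add, h]; abel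
  have h2 : a - a' = 0 :=
    eq_zero_of_E_V (sub_mem ha ha') (h1 ▸ sub_mem hb' hb)
  exact ⟨sub_eq_zero.1 h2, (sub_eq_zero.1 (h1.symm.trans h2)).symm⟩

/-! ### The isomorphism `V ≃ Q` defined by a scale -/

lemma IsScale.bijective {ξ₀ : P.X} (h : P.IsScale ξ₀) :
    Function.Bijective fun η : P.V => P.levi ξ₀ η := by
  let e : P.C ≃ₗ[P.C] P.E := LinearEquiv.ofBijective
    (LinearMap.toSpanSingleton P.C P.E ⟨ξ₀, h.mem⟩) (by
      constructor
      · rw [injective_iff_map_eq_zero]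
        intro f hf
        exact h.basis f (congrArg Subtype.val hf)
      · rintro ⟨ξ, hξ⟩
        obtain ⟨f, rfl⟩ := h.span ξ hξ
        exact ⟨f, rfl⟩)
  let F := (TensorProduct.lid P.C P.V).symm ≪≫ₗ
    (TensorProduct.congr e (LinearEquiv.refl P.C P.V)) ≪≫ₗ P.leviIso
  have hF : ∀ η : P.V, F η = P.levi ξ₀ η := by
    intro η
    have he : ((e 1 : P.E) : P.X) = ξ₀ := one_smul _ _
    change P.leviIso (e 1 ⊗ₜ[P.C] η) = _
    rw [P.leviIso_apply, he]
    rfl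
  have : (fun η : P.V => P.levi ξ₀ η) = F := funext fun η => (hF η).symm
  rw [this]
  exact F.bijective

/-- The isomorphism `V ≃ Q`, `η ↦ 𝓛(ξ₀, η)`, defined by a scale `ξ₀`. -/
noncomputable def leviEquiv {ξ₀ : P.X} (h : P.IsScale ξ₀) : P.V ≃ₗ[P.C] P.Q :=
  LinearEquiv.ofBijective
    { toFun := fun η : P.V => P.levi ξ₀ η
      map_add' := fun η₁ η₂ => by
        simp only [levi, Submodule.coe_add, P.lie_add_right, map_add]
      map_smul' := fun f η => by
        simp only [levi, Submodule.coe_smul, q_lie_smul_right, q_eq_zero (P.V_le_H η.2),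
          smul_zero, add_zero, RingHom.id_apply] }
    h.bijective

lemma leviEquiv_apply {ξ₀ : P.X} (h : P.IsScale ξ₀) (η : P.V) :
    leviEquiv h η = P.levi ξ₀ η := rfl

lemma levi_leviEquiv_symm {ξ₀ : P.X} (h : P.IsScale ξ₀) (w : P.Q) :
    P.levi ξ₀ ((leviEquiv h).symm w) = w :=
  (leviEquiv h).apply_symm_apply w

lemma leviEquiv_symm_levi {ξ₀ : P.X} (h : P.IsScale ξ₀) (η : P.V) :
    (leviEquiv h).symm (P.q (P.lie ξ₀ η)) = η :=
  (leviEquiv h).symm_apply_apply η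

lemma IsScale.levi_inj {ξ₀ : P.X} (h : P.IsScale ξ₀) {η₁ η₂ : P.X} (h₁ : η₁ ∈ P.V)
    (h₂ : η₂ ∈ P.V) (e : P.levi ξ₀ η₁ = P.levi ξ₀ η₂) : η₁ = η₂ :=
  congrArg Subtype.val (h.bijective.1 (a₁ := ⟨η₁, h₁⟩) (a₂ := ⟨η₂, h₂⟩) e)

lemma IsScale.exists_levi {ξ₀ : P.X} (h : P.IsScale ξ₀) (w : P.Q) :
    ∃ η ∈ P.V, w = P.levi ξ₀ η := by
  obtain ⟨η, hη⟩ := h.bijective.2 w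
  exact ⟨η, η.2, hη.symm⟩

end PathGeometry

open PathGeometry

/-! ### Projections of a partial Weyl structure -/

namespace PartialWeylData

variable {P : PathGeometry} (W : PartialWeylData P)

lemma Pi_eq {a b : P.X} (ha : a ∈ P.E) (hb : b ∈ P.V) (w : P.Q) :
    W.PiE (a + b + W.ι w) = a ∧ W.PiV (a + b + W.ι w) = b := by
  have h := W.decomp (a + b + W.ι w)
  have hq : P.q (a + b + W.ι w) = w := by
    rw [map_add, W.q_ι, q_eq_zero (add_mem (P.E_le_H ha) (P.V_le_H hb)), zero_add]
  rw [hq] at h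
  have h' := add_right_cancel h
  obtain ⟨h1, h2⟩ := eq_of_add_eq ha (W.PiE_mem _) hb (W.PiV_mem _) h'
  exact ⟨h1.symm, h2.symm⟩

/-- The splitting determines both projections, by uniqueness of the decomposition along
`E ⊕ V ⊕ ι(Q)`. -/
lemma Pi_congr {W W' : PartialWeylData P} (h : W.ι = W'.ι) :
    W.PiE = W'.PiE ∧ W.PiV = W'.PiV := by
  have key : ∀ φ, W.PiE φ = W'.PiE φ ∧ W.PiV φ = W'.PiV φ := by
    intro φ
    have h1 := W'.Pi_eq (W.PiE_mem φ) (W.PiV_mem φ) (P.q φ)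
    rw [← h, ← W.decomp φ] at h1
    exact ⟨h1.1.symm, h1.2.symm⟩
  exact ⟨LinearMap.ext fun φ => (key φ).1, LinearMap.ext fun φ => (key φ).2⟩

lemma ι_q (φ : P.X) : W.ι (P.q φ) = φ - W.PiE φ - W.PiV φ := by
  conv_rhs => rw [W.decomp φ]
  have := W.Pi_eq (W.PiE_mem φ) (W.PiV_mem φ) (P.q φ)
  rw [this.1, this.2]; abel

end PartialWeylData

lemma PathGeometry.H_induction {P : PathGeometry} {p : P.H → Prop}
    (hE : ∀ ψ : P.H, (ψ : P.X) ∈ P.E → p ψ) (hV : ∀ ψ : P.H, (ψ : P.X) ∈ P.V → p ψ)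
    (hadd : ∀ ψ₁ ψ₂, p ψ₁ → p ψ₂ → p (ψ₁ + ψ₂)) (ψ : P.H) : p ψ := by
  obtain ⟨ψ, hψ⟩ := ψ
  obtain ⟨a, ha, b, hb, rfl⟩ := Submodule.mem_sup.1 hψ
  exact hadd ⟨a, P.E_le_H ha⟩ ⟨b, P.V_le_H hb⟩ (hE _ ha) (hV _ hb)

/-! ### Uniqueness -/

namespace SatisfiesEqs

variable {P : PathGeometry} {ξ₀ : P.X} {W W' : PartialWeylData P}

lemma PiE_lie (h : SatisfiesEqs P ξ₀ W) {η : P.X} (hη : η ∈ P.V) :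
    W.PiE (P.lie ξ₀ η) = 0 := by
  have := h.eqPiE 1 η hη
  rwa [one_smul, P.D_one, zero_smul, neg_zero] at this

lemma ι_levi (h : SatisfiesEqs P ξ₀ W) {η : P.X} (hη : η ∈ P.V) :
    W.ι (P.levi ξ₀ η) = P.lie ξ₀ η - W.PiV (P.lie ξ₀ η) := by
  rw [levi, W.ι_q, h.PiE_lie hη, sub_zero]

lemma unique (hξ₀ : P.IsScale ξ₀) (h : SatisfiesEqs P ξ₀ W) (h' : SatisfiesEqs P ξ₀ W') :
    W = W' := by
  have hι : W.ι = W'.ι := by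
    refine LinearMap.ext fun w => ?_
    obtain ⟨η, hη, rfl⟩ := hξ₀.exists_levi w
    rw [h.ι_levi hη, h'.ι_levi hη]
    congr 1
    apply hξ₀.levi_inj (W.PiV_mem _) (W'.PiV_mem _)
    have e := (h.eqVE ⟨ξ₀, P.E_le_H hξ₀.mem⟩ hξ₀.mem η hη).2
    have e' := (h'.eqVE ⟨ξ₀, P.E_le_H hξ₀.mem⟩ hξ₀.mem η hη).2
    exact e.trans e'.symm
  have hV : ∀ ψ, ∀ η ∈ P.V, W.cov ψ η = W'.cov ψ η := by
    intro ψ η hη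
    induction ψ using H_induction with
    | hE ψ hψ =>
      exact hξ₀.levi_inj (h.memV _ _ hη) (h'.memV _ _ hη)
        ((h.eqVE ψ hψ η hη).1.trans (h'.eqVE ψ hψ η hη).1.symm)
    | hV ψ hψ =>
      exact hξ₀.levi_inj (h.memV _ _ hη) (h'.memV _ _ hη)
        ((h.eqVV ψ hψ η hη).trans (h'.eqVV ψ hψ η hη).symm)
    | hadd ψ₁ ψ₂ h₁ h₂ => rw [W.cov_add_left, W'.cov_add_left, h₁, h₂]
  have hE : ∀ ψ, ∀ ξ ∈ P.E, W.cov ψ ξ = W'.cov ψ ξ := by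
    intro ψ ξ hξ
    obtain ⟨f, rfl⟩ := hξ₀.span ξ hξ
    rw [h.eqE, h'.eqE]
  have hcov : W.cov = W'.cov := by
    funext ψ φ
    have hQ : W.cov ψ (W.ι (P.q φ)) = W'.cov ψ (W.ι (P.q φ)) := by
      obtain ⟨η, hη, e⟩ := hξ₀.exists_levi (P.q φ)
      rw [e, h.eqQ ψ ξ₀ hξ₀.mem η hη, hι, h'.eqQ ψ ξ₀ hξ₀.mem η hη, hV ψ η hη,
        hE ψ ξ₀ hξ₀.mem]
    rw [W.decomp φ, W.cov_add_right, W.cov_add_right, W'.cov_add_right, W'.cov_add_right,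
      hV _ _ (W.PiV_mem φ), hE _ _ (W.PiE_mem φ), hQ]
  obtain ⟨h1, h2⟩ := PartialWeylData.Pi_congr hι
  cases W; cases W'
  simp only at hι hcov h1 h2
  subst hι hcov h1 h2
  rfl

end SatisfiesEqs

/-! ### Existence -/

namespace PathGeometry.IsScale

variable {P : PathGeometry} {ξ₀ : P.X} (h : P.IsScale ξ₀)

lemma mem_H {ξ₀ : P.X} (h : P.IsScale ξ₀) : ξ₀ ∈ P.H := P.E_le_H h.mem

/-- `½ L⁻¹ q[ξ₀,[ξ₀,η]]`, the prescribed value of `Π_V [ξ₀, η]`. -/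
noncomputable def S (η : P.V) : P.V :=
  P.half • (leviEquiv h).symm (P.q (P.lie ξ₀ (P.lie ξ₀ η)))

lemma S_smul (f : P.C) (η : P.V) : h.S (f • η) = f • h.S η + P.D ξ₀ f • η := by
  have e : P.q (P.lie ξ₀ (P.lie ξ₀ ((f • η : P.V) : P.X))) =
      f • P.q (P.lie ξ₀ (P.lie ξ₀ η)) + (P.D ξ₀ f • P.q (P.lie ξ₀ η)
        + P.D ξ₀ f • P.q (P.lie ξ₀ η)) := by
    rw [Submodule.coe_smul, P.lie_smul_right, P.lie_add_right, map_add, q_lie_smul_right,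
      q_lie_smul_right, q_eq_zero (P.V_le_H η.2), smul_zero, add_zero, add_assoc]
  unfold S
  rw [e, map_add, map_add, map_smul, map_smul, leviEquiv_symm_levi, smul_add, smul_add,
    smul_comm P.half f, smul_smul P.half, ← add_smul, ← add_mul, P.half_add_half, one_mul]

/-- The composite `ι ∘ L : V → TM` of the splitting of `q` with the isomorphism `L : V ≃ Q`,
namely `η ↦ [ξ₀, η] - S η`. -/
noncomputable def ι₀ : P.V →ₗ[P.C] P.X where
  toFun η := P.lie ξ₀ η - h.S η
  map_add' η₁ η₂ := by
    simp only [S, Submodule.coe_add, P.lie_add_right, map_add, smul_add]; abel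
  map_smul' f η := by
    rw [S_smul]
    simp only [Submodule.coe_smul, Submodule.coe_add, P.lie_smul_right, RingHom.id_apply,
      smul_sub]
    abel

lemma ι₀_apply (η : P.V) : h.ι₀ η = P.lie ξ₀ η - h.S η := rfl

lemma q_ι₀ (η : P.V) : P.q (h.ι₀ η) = leviEquiv h η := by
  rw [ι₀_apply, map_sub, q_eq_zero (P.V_le_H (h.S η).2), sub_zero]; rfl

/-- The map `(f, η, ζ) ↦ f ξ₀ + η + ι (L ζ)`. -/
noncomputable def assemble : (P.C × P.V × P.V) →ₗ[P.C] P.X :=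
  (LinearMap.toSpanSingleton P.C P.X ξ₀).coprod (P.V.subtype.coprod h.ι₀)

lemma assemble_apply (x : P.C × P.V × P.V) :
    h.assemble x = x.1 • ξ₀ + (x.2.1 + h.ι₀ x.2.2) := rfl

lemma assemble_bijective : Function.Bijective h.assemble := by
  constructor
  · rw [injective_iff_map_eq_zero]
    rintro ⟨f, η, ζ⟩ e
    rw [assemble_apply] at e
    simp only at e
    have hζ : ζ = 0 := by
      have := congrArg P.q e
      rw [map_add, map_add, q_ι₀, map_smul, q_eq_zero h.mem_H, q_eq_zero (P.V_le_H η.2),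
        smul_zero, zero_add, zero_add, map_zero] at this
      exact (leviEquiv h).map_eq_zero_iff.1 this
    subst hζ
    rw [map_zero, add_zero] at e
    obtain ⟨h1, h2⟩ := eq_of_add_eq (P.E.smul_mem f h.mem) P.E.zero_mem η.2 P.V.zero_mem
      (e.trans (add_zero 0).symm)
    rw [h.basis f h1, Subtype.ext h2 (a2 := (0 : P.V))]
    rfl
  · intro φ
    have hm : φ - h.ι₀ ((leviEquiv h).symm (P.q φ)) ∈ P.H := by
      rw [← q_eq_zero_iff, map_sub, q_ι₀, LinearEquiv.apply_symm_apply, sub_self]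
    obtain ⟨a, ha, b, hb, e⟩ := Submodule.mem_sup.1 hm
    obtain ⟨f, rfl⟩ := h.span a ha
    refine ⟨(f, ⟨b, hb⟩, (leviEquiv h).symm (P.q φ)), ?_⟩
    rw [assemble_apply, ← add_assoc]
    exact eq_sub_iff_add_eq.1 e

/-- The decomposition `TM ≃ C × V × V` given by a scale. -/
noncomputable def split : P.X ≃ₗ[P.C] (P.C × P.V × P.V) :=
  (LinearEquiv.ofBijective h.assemble h.assemble_bijective).symm

lemma split_eq (f : P.C) (η ζ : P.V) :
    h.split (f • ξ₀ + (η + h.ι₀ ζ)) = (f, η, ζ) :=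
  (LinearEquiv.ofBijective h.assemble h.assemble_bijective).symm_apply_apply (f, η, ζ)

lemma eq_split (φ : P.X) :
    φ = (h.split φ).1 • ξ₀ + ((h.split φ).2.1 + h.ι₀ (h.split φ).2.2) :=
  ((LinearEquiv.ofBijective h.assemble h.assemble_bijective).apply_symm_apply φ).symm

lemma split_E (f : P.C) : h.split (f • ξ₀) = (f, 0, 0) := by
  simpa using h.split_eq f 0 0

lemma split_V (η : P.V) : h.split η = (0, η, 0) := by
  simpa using h.split_eq 0 η 0

lemma split_ι₀ (η : P.V) : h.split (h.ι₀ η) = (0, 0, η) := by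
  simpa using h.split_eq 0 0 η

lemma q_eq_split (φ : P.X) : P.q φ = leviEquiv h (h.split φ).2.2 := by
  conv_lhs => rw [h.eq_split φ]
  rw [map_add, map_add, q_ι₀, map_smul, q_eq_zero h.mem_H, q_eq_zero (P.V_le_H (Subtype.mem _)),
        smul_zero, zero_add, zero_add]

lemma split_lie (η : P.V) : h.split (P.lie ξ₀ η) = (0, h.S η, η) := by
  have : P.lie ξ₀ η = (0 : P.C) • ξ₀ + (h.S η + h.ι₀ η) := by
    rw [ι₀_apply]; simp
  rw [this, split_eq]

lemma eq_split_H {ψ : P.X} (hψ : ψ ∈ P.H) :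
    ψ = (h.split ψ).1 • ξ₀ + (h.split ψ).2.1 := by
  have h0 : (h.split ψ).2.2 = 0 := by
    rw [← (leviEquiv h).map_eq_zero_iff, ← q_eq_split, q_eq_zero hψ]
  conv_lhs => rw [h.eq_split ψ, h0, map_zero, add_zero]

/-- The endomorphism `ψ ↦ ½ ψ_E + ψ_V` of `H`, extended by zero to `TM`. -/
noncomputable def σ (ψ : P.X) : P.X :=
  (P.half * (h.split ψ).1) • ξ₀ + (h.split ψ).2.1

lemma σ_mem (ψ : P.X) : h.σ ψ ∈ P.H :=
  add_mem (P.H.smul_mem _ h.mem_H) (P.V_le_H (Subtype.mem _))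

lemma σ_add (ψ₁ ψ₂ : P.X) : h.σ (ψ₁ + ψ₂) = h.σ ψ₁ + h.σ ψ₂ := by
  simp only [σ, map_add, Prod.fst_add, Prod.snd_add, Submodule.coe_add, mul_add, add_smul]
  abel

lemma σ_smul (f : P.C) (ψ : P.X) : h.σ (f • ψ) = f • h.σ ψ := by
  simp only [σ, map_smul, Prod.smul_fst, Prod.smul_snd, Submodule.coe_smul, smul_add, smul_eq_mul,
    smul_smul]
  rw [mul_left_comm]

lemma σ_E {ψ : P.X} (hψ : ψ ∈ P.E) : h.σ ψ = P.half • ψ := by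
  obtain ⟨f, rfl⟩ := h.span ψ hψ
  rw [σ, split_E, mul_smul]
  simp

lemma σ_V {ψ : P.X} (hψ : ψ ∈ P.V) : h.σ ψ = ψ := by
  have := h.split_V ⟨ψ, hψ⟩
  simp only at this
  simp [σ, this]

/-- The partial connection on `V`: `∇_ψ η = L⁻¹ q[½ ψ_E + ψ_V, [ξ₀, η]]`. -/
noncomputable def N (ψ : P.X) (η : P.V) : P.V :=
  (leviEquiv h).symm (P.q (P.lie (h.σ ψ) (P.lie ξ₀ η)))

lemma levi_N (ψ : P.X) (η : P.V) :
    P.levi ξ₀ (h.N ψ η) = P.q (P.lie (h.σ ψ) (P.lie ξ₀ η)) :=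
  levi_leviEquiv_symm h _

lemma N_add_left (ψ₁ ψ₂ : P.X) (η : P.V) : h.N (ψ₁ + ψ₂) η = h.N ψ₁ η + h.N ψ₂ η := by
  simp only [N, σ_add, P.lie_add_left, map_add]

lemma N_smul_left (f : P.C) (ψ : P.X) (η : P.V) : h.N (f • ψ) η = f • h.N ψ η := by
  simp only [N, σ_smul, q_lie_smul_left f (h.σ_mem ψ), map_smul]

lemma N_add_right (ψ : P.X) (η₁ η₂ : P.V) : h.N ψ (η₁ + η₂) = h.N ψ η₁ + h.N ψ η₂ := by
  simp only [N, Submodule.coe_add, P.lie_add_right, map_add]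

lemma N_zero (ψ : P.X) : h.N ψ 0 = 0 := by
  have := h.N_add_right ψ 0 0
  rw [add_zero] at this
  exact left_eq_add.1 this

/-- The Leibniz rule for `∇^V`.  Half of the derivative along `ψ_E` comes from the outer bracket
and half from the inner one. -/
lemma N_smul_right (f : P.C) {ψ : P.X} (hψ : ψ ∈ P.H) (η : P.V) :
    h.N ψ (f • η) = f • h.N ψ η + P.D ψ f • η := by
  have hη : P.q (P.lie (h.σ ψ) η) = (P.half * (h.split ψ).1) • P.q (P.lie ξ₀ η) := by
    rw [σ, P.lie_add_left, map_add, q_lie_smul_left _ h.mem_H, q_lie_VV (Subtype.mem _) η.2,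
      add_zero]
  have hD : P.D (h.σ ψ) f + P.D ξ₀ f * (P.half * (h.split ψ).1) = P.D ψ f := by
    conv_rhs => rw [h.eq_split_H hψ]
    rw [σ, P.D_add_left, P.D_add_left, P.D_smul_left, P.D_smul_left]
    linear_combination ((h.split ψ).1 * P.D ξ₀ f) * P.half_add_half
  unfold N
  rw [Submodule.coe_smul, P.lie_smul_right, P.lie_add_right, map_add, q_lie_smul_right,
    q_lie_smul_right, q_eq_zero (P.V_le_H η.2), smul_zero, add_zero, hη, smul_smul, add_assoc,
    ← add_smul, hD, map_add, map_smul, map_smul, leviEquiv_symm_levi]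

/-- The partial Weyl structure of a scale. -/
noncomputable def weyl : PartialWeylData P where
  cov ψ φ := P.D (ψ : P.X) (h.split φ).1 • ξ₀ +
    (h.N ψ (h.split φ).2.1 + h.ι₀ (h.N ψ (h.split φ).2.2))
  cov_add_left ψ₁ ψ₂ φ := by
    simp only [Submodule.coe_add, P.D_add_left, N_add_left, add_smul, map_add]; abel
  cov_smul_left f ψ φ := by
    simp only [Submodule.coe_smul, P.D_smul_left, N_smul_left, mul_smul, map_smul, smul_add]
  cov_add_right ψ φ₁ φ₂ := by
    simp only [map_add, Prod.fst_add, Prod.snd_add, P.D_add_right, N_add_right, add_smul,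
      Submodule.coe_add]
    abel
  cov_leibniz f ψ φ := by
    have e : P.D (ψ : P.X) f • φ = P.D (ψ : P.X) f • _ := congrArg _ (h.eq_split φ)
    rw [e]
    simp only [map_smul, Prod.smul_fst, Prod.smul_snd, smul_eq_mul,
      P.D_mul_right, h.N_smul_right _ ψ.2, Submodule.coe_add, Submodule.coe_smul, map_add,
      smul_add, add_smul, mul_smul]
    rw [smul_comm (h.split φ).1]
    abel
  ι := h.ι₀ ∘ₗ (leviEquiv h).symm.toLinearMap
  q_ι w := by
    rw [LinearMap.comp_apply, q_ι₀]
    exact (leviEquiv h).apply_symm_apply w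
  PiE := (LinearMap.toSpanSingleton P.C P.X ξ₀) ∘ₗ LinearMap.fst _ _ _ ∘ₗ h.split.toLinearMap
  PiV := P.V.subtype ∘ₗ LinearMap.fst _ _ _ ∘ₗ LinearMap.snd _ _ _ ∘ₗ h.split.toLinearMap
  PiE_mem ψ := P.E.smul_mem _ h.mem
  PiV_mem ψ := Subtype.mem _
  decomp ψ := by
    rw [q_eq_split h ψ]
    simp only [LinearMap.comp_apply, LinearEquiv.coe_coe, LinearEquiv.symm_apply_apply]
    rw [add_assoc]
    exact h.eq_split ψ

lemma weyl_cov (ψ : P.H) (φ : P.X) :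
    h.weyl.cov ψ φ = P.D (ψ : P.X) (h.split φ).1 • ξ₀ +
      (h.N ψ (h.split φ).2.1 + h.ι₀ (h.N ψ (h.split φ).2.2)) := rfl

lemma D_zero (ψ : P.X) : P.D ψ 0 = 0 := by
  have := P.D_add_right ψ 0 0
  rw [add_zero] at this
  exact left_eq_add.1 this

lemma weyl_cov_E (ψ : P.H) (f : P.C) : h.weyl.cov ψ (f • ξ₀) = P.D (ψ : P.X) f • ξ₀ := by
  rw [weyl_cov, split_E]
  simp [N_zero]

lemma weyl_cov_V (ψ : P.H) (η : P.V) : h.weyl.cov ψ η = h.N ψ η := by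
  simp [weyl_cov, split_V, N_zero, D_zero]

lemma weyl_ι_levi (η : P.V) : h.weyl.ι (P.levi ξ₀ η) = h.ι₀ η :=
  congrArg h.ι₀ (leviEquiv_symm_levi h η)

lemma weyl_cov_ι (ψ : P.H) (η : P.V) : h.weyl.cov ψ (h.ι₀ η) = h.ι₀ (h.N ψ η) := by
  simp [weyl_cov, split_ι₀, N_zero, D_zero]

lemma weyl_PiV_lie (f : P.C) (η : P.V) :
    h.weyl.PiV (P.lie (f • ξ₀) η) = f • h.S η ∧
      h.weyl.PiE (P.lie (f • ξ₀) η) = -(P.D η f • ξ₀) := by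
  have e : h.split (P.lie (f • ξ₀) η) = f • (0, h.S η, η) - (P.D (η : P.X) f, 0, 0) := by
    rw [P.lie_smul_left, map_sub, map_smul, split_lie, split_E]
  constructor
  · change (((h.split (P.lie (f • ξ₀) η)).2.1 : P.V) : P.X) = _
    rw [e]; simp
  · change (h.split (P.lie (f • ξ₀) η)).1 • ξ₀ = _
    rw [e]; simp

lemma weyl_satisfies : SatisfiesEqs P ξ₀ h.weyl where
  eqE := h.weyl_cov_E
  memV ψ η hη := by
    rw [h.weyl_cov_V ψ ⟨η, hη⟩]; exact Subtype.mem _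
  eqVE ψ hψ η hη := by
    constructor
    · rw [h.weyl_cov_V ψ ⟨η, hη⟩, levi_N, h.σ_E hψ, q_lie_smul_left _ ψ.2]
    · obtain ⟨f, hf⟩ := h.span _ hψ
      rw [hf, (h.weyl_PiV_lie f ⟨η, hη⟩).1, q_lie_smul_left _ h.mem_H]
      change leviEquiv h (f • h.S ⟨η, hη⟩) = _
      rw [map_smul, S, map_smul, LinearEquiv.apply_symm_apply, smul_comm]
  eqPiE f η hη := (h.weyl_PiV_lie f ⟨η, hη⟩).2
  eqVV ψ hψ η hη := by
    rw [h.weyl_cov_V ψ ⟨η, hη⟩, levi_N, h.σ_V hψ]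
  eqQ ψ ξ hξ η hη := by
    obtain ⟨f, rfl⟩ := h.span ξ hξ
    have e : ∀ (g : P.C) (ζ : P.V), P.levi (g • ξ₀) ζ = P.levi ξ₀ ((g • ζ : P.V) : P.X) := by
      intro g ζ
      rw [levi, q_lie_smul_left _ h.mem_H]
      exact ((leviEquiv h).map_smul g ζ).symm
    lift η to P.V using hη
    rw [e, weyl_ι_levi, weyl_cov_ι, weyl_cov_E, weyl_cov_V, e, e, map_add, weyl_ι_levi,
      weyl_ι_levi, N_smul_right h f ψ.2, map_add, add_comm]

end PathGeometry.IsScale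

/-! ### The structural characterization -/

section Structural

variable {P : PathGeometry} {ξ₀ : P.X} {W : PartialWeylData P}

lemma SatisfiesEqs.cov_scale (h : SatisfiesEqs P ξ₀ W) (ψ : P.H) : W.cov ψ ξ₀ = 0 := by
  have := h.eqE ψ 1
  rwa [one_smul, P.D_one, zero_smul] at this

lemma SatisfiesEqs.structural (hξ₀ : P.IsScale ξ₀) (h : SatisfiesEqs P ξ₀ W) :
    StructuralProps P ξ₀ W where
  parE ψ ξ hξ := by
    obtain ⟨f, rfl⟩ := hξ₀.span ξ hξ
    rw [h.eqE]; exact P.E.smul_mem _ hξ₀.mem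
  parV := h.memV
  parQ ψ w := by
    obtain ⟨η, hη, rfl⟩ := hξ₀.exists_levi w
    rw [h.eqQ ψ _ hξ₀.mem _ hη]
    exact ⟨_, rfl⟩
  parScale := h.cov_scale
  parLevi := h.eqQ
  torsEV ψ χ hψ hχ := by
    have e1 : W.cov ψ χ = W.PiV (P.lie ψ χ) :=
      hξ₀.levi_inj (h.memV _ _ hχ) (W.PiV_mem _)
        ((h.eqVE ψ hψ χ hχ).1.trans (h.eqVE ψ hψ χ hχ).2.symm)
    have e2 : W.cov χ ψ = - W.PiE (P.lie ψ χ) := by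
      obtain ⟨f, hf⟩ := hξ₀.span _ hψ
      rw [hf, h.eqE, h.eqPiE f χ hχ, neg_neg]
    refine ⟨- P.q (P.lie ψ χ), ?_⟩
    rw [map_neg, W.ι_q, e1, e2]; abel
  torsHQ ψ w := by
    obtain ⟨η, hη, rfl⟩ := hξ₀.exists_levi w
    have e0 : P.levi 0 η = 0 := by
      have h0 : P.lie 0 η = 0 := by simpa using P.lie_add_left 0 0 η
      rw [levi, h0, map_zero]
    rw [h.eqQ ψ _ hξ₀.mem _ hη, W.q_ι, h.cov_scale, e0, zero_add, h.ι_levi hη]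
    induction ψ using H_induction with
    | hE ψ hψ =>
      obtain ⟨f, hf⟩ := hξ₀.span _ hψ
      have e1 := (h.eqVE ⟨ξ₀, hξ₀.mem_H⟩ hξ₀.mem η hη).2
      simp only [levi] at e1
      have e2 := (h.eqVE ψ hψ η hη).1
      rw [e2, P.lie_sub_right, map_sub, hf, q_lie_smul_left _ hξ₀.mem_H,
        q_lie_smul_left _ hξ₀.mem_H, e1, eq_sub_iff_add_eq, smul_comm P.half, ← smul_add,
        ← add_smul, P.half_add_half, one_smul]
    | hV ψ hψ =>
      rw [h.eqVV ψ hψ η hη, P.lie_sub_right, map_sub, q_lie_VV hψ (W.PiV_mem _), sub_zero]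
    | hadd ψ₁ ψ₂ h₁ h₂ =>
      rw [W.cov_add_left, Submodule.coe_add, P.lie_add_left, map_add, ← h₁, ← h₂]
      simp only [levi, P.lie_add_right, map_add]

lemma StructuralProps.cov_smul_scale (h : StructuralProps P ξ₀ W) (ψ : P.H) (f : P.C) :
    W.cov ψ (f • ξ₀) = P.D (ψ : P.X) f • ξ₀ := by
  rw [W.cov_leibniz, h.parScale, smul_zero, zero_add]

/-- The condition `τ(E,V) ⊂ ι(Q)` read in components. -/
lemma StructuralProps.Pi_lie (h : StructuralProps P ξ₀ W) (ψ χ : P.H)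
    (hψ : (ψ : P.X) ∈ P.E) (hχ : (χ : P.X) ∈ P.V) :
    W.PiE (P.lie ψ χ) = - W.cov χ ψ ∧ W.PiV (P.lie ψ χ) = W.cov ψ χ := by
  obtain ⟨w, hw⟩ := h.torsEV ψ χ hψ hχ
  have e : P.lie ψ χ = - W.cov χ ψ + W.cov ψ χ + W.ι (-w) := by
    rw [map_neg, hw]; abel
  rw [e]
  exact W.Pi_eq (neg_mem (h.parE _ _ hψ)) (h.parV _ _ hχ) _

/-- The condition `τ(H,ι(Q)) ⊂ H` evaluated on `ι (𝓛(ξ₀, η))`. -/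
lemma StructuralProps.levi_cov (hξ₀ : P.IsScale ξ₀) (h : StructuralProps P ξ₀ W) (ψ : P.H)
    {η : P.X} (hη : η ∈ P.V) :
    P.levi ξ₀ (W.cov ψ η) =
      P.q (P.lie ψ (P.lie ξ₀ η)) - P.q (P.lie ψ (W.cov ⟨ξ₀, hξ₀.mem_H⟩ η)) := by
  have e0 : P.levi 0 η = 0 := by
    have h0 : P.lie 0 η = 0 := by simpa using P.lie_add_left 0 0 η
    rw [levi, h0, map_zero]
  have e := h.torsHQ ψ (P.levi ξ₀ η)
  obtain ⟨e1, e2⟩ := h.Pi_lie ⟨ξ₀, hξ₀.mem_H⟩ ⟨η, P.V_le_H hη⟩ hξ₀.mem hη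
  simp only at e1 e2
  rw [h.parScale, neg_zero] at e1
  rw [h.parLevi ψ _ hξ₀.mem _ hη, W.q_ι, h.parScale, e0, zero_add] at e
  rw [e, levi, W.ι_q, e1, e2, sub_zero, P.lie_sub_right, map_sub]

lemma StructuralProps.satisfies (hξ₀ : P.IsScale ξ₀) (h : StructuralProps P ξ₀ W) :
    SatisfiesEqs P ξ₀ W where
  eqE := h.cov_smul_scale
  memV := h.parV
  eqVE ψ hψ η hη := by
    have key : P.levi ξ₀ (W.cov ψ η) = P.half • P.q (P.lie ψ (P.lie ξ₀ η)) := by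
      have e := h.levi_cov hξ₀ ψ hη
      obtain ⟨f, hf⟩ := hξ₀.span _ hψ
      have hf' : ψ = f • (⟨ξ₀, hξ₀.mem_H⟩ : P.H) := Subtype.ext hf
      -- For `ψ = f ξ₀` the last term of `levi_cov` equals the left-hand side.
      have e3 : P.q (P.lie ψ (W.cov ⟨ξ₀, hξ₀.mem_H⟩ η)) = P.levi ξ₀ (W.cov ψ η) := by
        rw [hf', W.cov_smul_left, levi, q_lie_smul_right,
          q_eq_zero (P.V_le_H (h.parV _ _ hη)), smul_zero, add_zero, ← q_lie_smul_left _ hξ₀.mem_H]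
        rfl
      rw [e3, eq_sub_iff_add_eq] at e
      rw [← e, smul_add, ← add_smul, P.half_add_half, one_smul]
    refine ⟨key, ?_⟩
    have := (h.Pi_lie ψ ⟨η, P.V_le_H hη⟩ hψ hη).2
    simp only at this
    rw [this, key]
  eqPiE f η hη := by
    have := (h.Pi_lie ⟨f • ξ₀, P.H.smul_mem f hξ₀.mem_H⟩ ⟨η, P.V_le_H hη⟩
      (P.E.smul_mem f hξ₀.mem) hη).1
    rw [h.cov_smul_scale] at this
    exact this
  eqVV ψ hψ η hη := by
    rw [h.levi_cov hξ₀ ψ hη, q_lie_VV hψ (h.parV _ _ hη), sub_zero]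
  eqQ := h.parLevi

end Structural

/-- Proposition 2.3 of the paper.  Given a path geometry `(M,E,V)` and a
nowhere vanishing section `ξ₀ ∈ Γ(E)`, one can uniquely define a projection
`Π = Π_E ⊕ Π_V : TM → H` (equivalently a splitting `ι` of `q`) and partial connections
`∇^E`, `∇^V`, `∇^{ι(Q)}` (combined into one partial connection on `TM` via the
decomposition `TM = E ⊕ V ⊕ ι(Q)`) by the five displayed equations; moreover the
resulting data satisfy the structural conditions (i), (ii) and the first two conditions
of (iii) of Theorem 2.2, and are in turn uniquely determined by these. -/
theorem partialWeyl_existsUnique (P : PathGeometry) (ξ₀ : P.X) (hξ₀ : P.IsScale ξ₀) :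
    (∃! W : PartialWeylData P, SatisfiesEqs P ξ₀ W) ∧
      ∀ W : PartialWeylData P, SatisfiesEqs P ξ₀ W ↔ StructuralProps P ξ₀ W := by
  exact ⟨⟨hξ₀.weyl, hξ₀.weyl_satisfies, fun W h => h.unique hξ₀ hξ₀.weyl_satisfies⟩,
    fun W => ⟨fun h => h.structural hξ₀, fun h => h.satisfies hξ₀⟩⟩
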